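/- arXiv:math/9911160 — 2 statements merged into one kernel-verified Lean document; each statement's English description precedes it below -/
import Mathlib

section
/- If a polynomial P on ℝⁿ vanishes on the zero set of a nonzero harmonic polynomial Ψ on ℝⁿ with real coefficients, and Ψ is irreducible over ℝ, then Ψ divides P in ℝ[x₁,…,xₙ]. -/
open MvPolynomial

/-- The Laplacian of a polynomial on `ℝⁿ`. -/
noncomputable def mvLap {n : ℕ} (P : MvPolynomial (Fin n) ℝ) : MvPolynomial (Fin n) ℝ :=
  ∑ i : Fin n, pderiv i (pderiv i P)


open MeasureTheory

noncomputable def gw (t : ℝ) : ℝ := Real.exp (-(1/2) * t ^ 2)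

lemma gw_pos (t : ℝ) : 0 < gw t := Real.exp_pos _

lemma gw_cont : Continuous gw := by unfold gw; fun_prop

lemma gw_int (k : ℕ) : Integrable (fun t : ℝ => t ^ k * gw t) := by
  have h := integrable_rpow_mul_exp_neg_mul_sq (b := 1/2) (by norm_num) (s := (k : ℝ))
    (by have : (0:ℝ) ≤ k := Nat.cast_nonneg k
        linarith)
  simpa [gw, Real.rpow_natCast] using h

noncomputable def gm (k : ℕ) : ℝ := ∫ t : ℝ, t ^ k * gw t

lemma gm_succ (k : ℕ) : gm (k + 1) = k * gm (k - 1) := by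
  have hd : ∀ t : ℝ, HasDerivAt (fun t : ℝ => t ^ k * gw t)
      ((k : ℝ) * (t ^ (k - 1) * gw t) - t ^ (k + 1) * gw t) t := by
    intro t
    have h1 := hasDerivAt_pow k t
    have h2 : HasDerivAt gw (gw t * (-(1/2) * (2 * t))) t := by
      have := ((hasDerivAt_pow 2 t).const_mul (-(1/2) : ℝ)).exp
      have h3 : gw = fun y => Real.exp (-(1/2) * y ^ 2) := rfl
      rw [h3]
      simpa using this
    have h3 := h1.mul h2
    have h4 : (k : ℝ) * (t ^ (k - 1) * gw t) - t ^ (k + 1) * gw t =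
      (k : ℝ) * t ^ (k - 1) * gw t + t ^ k * (gw t * (-(1/2) * (2 * t))) := by ring
    rw [h4]
    exact h3
  have hi := (((gw_int (k - 1)).const_mul (k : ℝ)).sub (gw_int (k + 1)))
  have h0 := integral_eq_zero_of_hasDerivAt_of_integrable hd hi (gw_int k)
  rw [integral_sub ((gw_int (k - 1)).const_mul (k : ℝ)) (gw_int (k + 1)), integral_const_mul] at h0
  unfold gm
  linarith

noncomputable def gW {n : ℕ} (x : Fin n → ℝ) : ℝ := ∏ i, gw (x i)

lemma gW_pos {n : ℕ} (x : Fin n → ℝ) : 0 < gW x := Finset.prod_pos fun i _ => gw_pos _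

lemma gW_cont {n : ℕ} : Continuous (gW : (Fin n → ℝ) → ℝ) := by
  unfold gW
  exact continuous_finsetProd _ fun i _ => gw_cont.comp (continuous_apply i)

lemma mon_eq {n : ℕ} (m : Fin n →₀ ℕ) (c : ℝ) (x : Fin n → ℝ) :
    eval x (monomial m c) * gW x = c * ∏ i, (x i ^ m i * gw (x i)) := by
  rw [eval_monomial, Finsupp.prod_fintype _ _ (by simp), gW, Finset.prod_mul_distrib, mul_assoc]

lemma poly_int {n : ℕ} (p : MvPolynomial (Fin n) ℝ) :
    Integrable (fun x : Fin n → ℝ => eval x p * gW x) := by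
  induction p using MvPolynomial.induction_on' with
  | monomial m c =>
    simp only [mon_eq]
    refine Integrable.const_mul ?_ c
    exact Integrable.fintype_prod (f := fun i t => t ^ m i * gw t) fun i => gw_int (m i)
  | add p q hp hq =>
    simp only [map_add, add_mul]
    exact hp.add hq

noncomputable def gL {n : ℕ} (p : MvPolynomial (Fin n) ℝ) : ℝ :=
  ∫ x : Fin n → ℝ, eval x p * gW x

lemma gL_add {n : ℕ} (p q : MvPolynomial (Fin n) ℝ) : gL (p + q) = gL p + gL q := by
  unfold gL
  simp only [map_add, add_mul]
  exact integral_add (poly_int p) (poly_int q)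

lemma gL_zero {n : ℕ} : gL (0 : MvPolynomial (Fin n) ℝ) = 0 := by simp [gL]

lemma gL_sum {n : ℕ} {ι : Type*} (s : Finset ι) (f : ι → MvPolynomial (Fin n) ℝ) :
    gL (∑ i ∈ s, f i) = ∑ i ∈ s, gL (f i) := by
  classical
  induction s using Finset.induction_on with
  | empty => simp [gL_zero]
  | insert a s ha ih => rw [Finset.sum_insert ha, Finset.sum_insert ha, gL_add, ih]

lemma gL_nsmul {n : ℕ} (d : ℕ) (p : MvPolynomial (Fin n) ℝ) : gL (d • p) = d * gL p := by
  unfold gL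
  rw [← integral_const_mul]
  simp [mul_assoc]

lemma gL_mon {n : ℕ} (m : Fin n →₀ ℕ) (c : ℝ) : gL (monomial m c) = c * ∏ i, gm (m i) := by
  unfold gL
  simp only [mon_eq]
  rw [integral_const_mul]
  congr 1
  exact integral_fintype_prod_eq_prod (fun i t => t ^ m i * gw t)

lemma gL_parts {n : ℕ} (i : Fin n) (p : MvPolynomial (Fin n) ℝ) :
    gL (pderiv i p) = gL (X i * p) := by
  induction p using MvPolynomial.induction_on' with
  | monomial m c =>
    rw [pderiv_monomial, X, monomial_mul, gL_mon, gL_mon, one_mul, mul_assoc]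
    congr 1
    rw [← Finset.mul_prod_erase _ _ (Finset.mem_univ i),
      ← Finset.mul_prod_erase Finset.univ (fun j => gm ((Finsupp.single i 1 + m : Fin n →₀ ℕ) j))
        (Finset.mem_univ i), ← mul_assoc]
    congr 1
    · simp [add_comm 1, gm_succ]
    · refine Finset.prod_congr rfl fun j hj => ?_
      have : i ≠ j := (Finset.ne_of_mem_erase hj).symm
      simp [this]
  | add p q hp hq => rw [map_add, gL_add, mul_add, gL_add, hp, hq]

lemma gL_hom {n : ℕ} (p : MvPolynomial (Fin n) ℝ) (d : ℕ) (hd : d ≠ 0) (hp : p.IsHomogeneous d)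
    (hl : mvLap p = 0) : gL p = 0 := by
  have h1 := gL_nsmul d p
  rw [← hp.sum_X_mul_pderiv, gL_sum] at h1
  simp only [← gL_parts] at h1
  rw [← gL_sum] at h1
  change gL (mvLap p) = _ at h1
  rw [hl, gL_zero] at h1
  have : (d : ℝ) ≠ 0 := Nat.cast_ne_zero.2 hd
  simpa [this] using h1.symm

lemma hom_zero {n : ℕ} (p : MvPolynomial (Fin n) ℝ) (d : ℕ) (hd : d ≠ 0) (hp : p.IsHomogeneous d)
    (hl : mvLap p = 0) (hnn : ∀ x, 0 ≤ eval x p) : p = 0 := by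
  have h := gL_hom p d hd hp hl
  have h2 := (integral_eq_zero_iff_of_nonneg
    (fun x => mul_nonneg (hnn x) (gW_pos x).le) (poly_int p)).1 h
  have h3 := (Continuous.ae_eq_iff_eq _ ((MvPolynomial.continuous_eval p).mul gW_cont)
    continuous_zero).1 h2
  refine MvPolynomial.funext fun x => ?_
  have := congrFun h3 x
  simpa [(gW_pos x).ne'] using this

lemma coeff_lap {n : ℕ} (p : MvPolynomial (Fin n) ℝ) (m : Fin n →₀ ℕ) :
    coeff m (mvLap p) = ∑ i, coeff (m + Finsupp.single i 2) p * ((m i + 2) * (m i + 1)) := by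
  unfold mvLap
  rw [coeff_sum]
  refine Finset.sum_congr rfl fun i _ => ?_
  rw [coeff_pderiv, coeff_pderiv, add_assoc, ← Finsupp.single_add]
  simp
  ring

lemma lap_hom {n : ℕ} (p : MvPolynomial (Fin n) ℝ) (hl : mvLap p = 0) (d : ℕ) :
    mvLap (homogeneousComponent d p) = 0 := by
  ext m
  rw [coeff_lap]
  simp only [coeff_homogeneousComponent, map_add, Finsupp.degree_single]
  by_cases h : m.degree + 2 = d
  · simp only [h, if_true]
    rw [← coeff_lap, hl]
  · simp [h]

lemma top_nonneg {n : ℕ} (p : MvPolynomial (Fin n) ℝ) (hd : 0 < p.totalDegree)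
    (hnn : ∀ x, 0 ≤ eval x p) (x : Fin n → ℝ) :
    0 ≤ eval x (homogeneousComponent p.totalDegree p) := by
  by_contra! hneg
  set d := p.totalDegree
  set c : ℕ → ℝ := fun k => eval x (homogeneousComponent k p)
  let q : Polynomial ℝ := ∑ k ∈ Finset.range (d + 1), Polynomial.C (c k) * Polynomial.X ^ k
  have hq : ∀ t : ℝ, q.eval t = eval (t • x) p := by
    intro t
    conv_rhs => rw [← sum_homogeneousComponent p]
    rw [map_sum, Polynomial.eval_finsetSum]
    refine Finset.sum_congr rfl fun k _ => ?_
    have h2 : eval (t • x) (homogeneousComponent k p) = t ^ k * c k := by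
      have hh := homogeneousComponent_isHomogeneous k p
      simp only [c]
      rw [eval_eq, eval_eq, Finset.mul_sum]
      refine Finset.sum_congr rfl fun m hm => ?_
      have hk : m.degree = k := by
        have := hh (mem_support_iff.1 hm)
        rwa [Finsupp.degree_eq_weight_one]
      have : ∏ i ∈ m.support, (t • x) i ^ m i = t ^ k * ∏ i ∈ m.support, x i ^ m i := by
        simp only [Pi.smul_apply, smul_eq_mul, mul_pow]
        rw [Finset.prod_mul_distrib, Finset.prod_pow_eq_pow_sum, ← hk]
        rfl
      rw [this]; ring
    rw [h2, Polynomial.eval_mul, Polynomial.eval_C, Polynomial.eval_pow, Polynomial.eval_X,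
      mul_comm]
  have hcoeff : q.coeff d = c d := by
    change (∑ k ∈ Finset.range (d + 1), Polynomial.C (c k) * Polynomial.X ^ k).coeff d = c d
    rw [Polynomial.finsetSum_coeff]
    simp only [Polynomial.coeff_C_mul, Polynomial.coeff_X_pow, mul_ite, mul_one, mul_zero]
    rw [Finset.sum_ite_eq, if_pos (Finset.mem_range.2 (Nat.lt_succ_self d))]
  have hcd : c d ≠ 0 := hneg.ne
  have hdeg : q.natDegree = d := by
    apply le_antisymm
    · refine Polynomial.natDegree_sum_le_of_forall_le _ _ fun k hk => ?_
      exact (Polynomial.natDegree_C_mul_X_pow_le _ _).trans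
        (Nat.lt_succ_iff.1 (Finset.mem_range.1 hk))
    · exact Polynomial.le_natDegree_of_ne_zero (by rw [hcoeff]; exact hcd)
  have ht := Polynomial.tendsto_atBot_of_leadingCoeff_nonpos q
    (Polynomial.natDegree_pos_iff_degree_pos.1 (by omega))
    (by rw [Polynomial.leadingCoeff, hdeg, hcoeff]; exact hneg.le)
  obtain ⟨t, ht⟩ := (ht.eventually (Filter.eventually_lt_atBot 0)).exists
  rw [hq] at ht
  exact absurd (hnn _) (not_le.2 ht)

lemma exists_neg {n : ℕ} (p : MvPolynomial (Fin n) ℝ) (hd : 0 < p.totalDegree)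
    (hl : mvLap p = 0) : ∃ x, eval x p < 0 := by
  by_contra! hnn
  have h := hom_zero _ _ hd.ne' (homogeneousComponent_isHomogeneous p.totalDegree p)
    (lap_hom p hl _) (top_nonneg p hd hnn)
  have hp : p ≠ 0 := by rintro rfl; simp at hd
  obtain ⟨m, hm, hmd⟩ := Finset.exists_mem_eq_sup p.support (support_nonempty.2 hp)
    (fun s => s.sum fun _ e => e)
  have h2 := congrArg (coeff m) h
  rw [coeff_homogeneousComponent, if_pos (by
    rw [totalDegree, hmd]; rfl)] at h2
  exact mem_support_iff.1 hm (by simpa using h2)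

lemma zero_of_open {n : ℕ} (D : MvPolynomial (Fin n) ℝ) (a : Fin n → ℝ) 
    (h : ∀ᶠ x in nhds a, eval x D = 0) : D = 0 := by
  obtain ⟨ε, hε, hb⟩ := Metric.eventually_nhds_iff.1 h
  refine MvPolynomial.funext_set (fun i => Set.Ioo (a i - ε) (a i + ε))
    (fun i => Set.Ioo_infinite (by linarith)) fun x hx => ?_
  rw [map_zero]
  apply hb
  rw [dist_pi_lt_iff hε]
  intro i
  have := hx i (Set.mem_univ i)
  rw [Real.dist_eq, abs_lt]
  constructor <;> linarith [this.1, this.2]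

lemma bezout {R : Type*} [CommRing R] [IsDomain R] [UniqueFactorizationMonoid R]
    (f p : Polynomial R) (hf : Irreducible f) (hd : f.natDegree ≠ 0) (hnd : ¬ f ∣ p) :
    ∃ (u v : Polynomial R) (D : R), D ≠ 0 ∧ u * f + v * p = Polynomial.C D := by
  classical
  let K := FractionRing R
  have hprim := hf.isPrimitive hd
  have hirr := (hprim.irreducible_iff_irreducible_map_fraction_map (K := K)).1 hf
  have hnd' : ¬ (f.map (algebraMap R K)) ∣ (p.map (algebraMap R K)) := fun h =>
    hnd (hprim.dvd_of_fraction_map_dvd_fraction_map h)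
  obtain ⟨u, v, huv⟩ := (hirr.coprime_iff_not_dvd.2 hnd')
  obtain ⟨b, hb, hbu⟩ := IsLocalization.integerNormalization_spec (nonZeroDivisors R) u
  obtain ⟨c, hc, hcv⟩ := IsLocalization.integerNormalization_spec (nonZeroDivisors R) v
  set u' := IsLocalization.integerNormalization (nonZeroDivisors R) u
  set v' := IsLocalization.integerNormalization (nonZeroDivisors R) v
  refine ⟨Polynomial.C c * u', Polynomial.C b * v', c * b,
    mul_ne_zero (nonZeroDivisors.ne_zero hc) (nonZeroDivisors.ne_zero hb), ?_⟩
  apply Polynomial.map_injective (algebraMap R K) (IsFractionRing.injective R K)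
  simp only [Polynomial.map_add, Polynomial.map_mul, hbu, hcv, Polynomial.map_C, Algebra.smul_def,
    Polynomial.C_mul, map_mul]
  have e : ∀ r : R, (algebraMap R (Polynomial K)) r = Polynomial.C (algebraMap R K r) := fun r => rfl
  rw [e, e]
  linear_combination (Polynomial.C (algebraMap R K c) * Polynomial.C (algebraMap R K b)) * huv

lemma dvd_zero_coord {m : ℕ} (Ψ P : MvPolynomial (Fin (m + 1)) ℝ) (hirr : Irreducible Ψ)
    (hvan : ∀ x : Fin (m + 1) → ℝ, eval x Ψ = 0 → eval x P = 0)
    (s t : ℝ) (a : Fin m → ℝ) (hs : eval (Fin.cons s a : Fin (m + 1) → ℝ) Ψ < 0)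
    (ht : 0 < eval (Fin.cons t a : Fin (m + 1) → ℝ) Ψ) : Ψ ∣ P := by
  by_contra hnd
  set f := finSuccEquiv ℝ m Ψ with hf
  have hfi : Irreducible f := (MulEquiv.irreducible_iff (finSuccEquiv ℝ m)).2 hirr
  have hfd : f.natDegree ≠ 0 := by
    intro h0
    rw [eval_eq_eval_mv_eval', ← hf, Polynomial.eq_C_of_natDegree_eq_zero h0] at hs ht
    simp at hs ht
    linarith
  have hnd' : ¬ f ∣ finSuccEquiv ℝ m P := by
    rintro h
    exact hnd ((map_dvd_iff (finSuccEquiv ℝ m)).1 h)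
  obtain ⟨u, v, D, hD, huv⟩ := bezout f _ hfi hfd hnd'
  apply hD
  have cont : ∀ r : ℝ, Continuous fun x : Fin m → ℝ => eval (Fin.cons r x : Fin (m + 1) → ℝ) Ψ := by
    intro r
    refine (MvPolynomial.continuous_eval Ψ).comp ?_
    fun_prop
  have cont2 : ∀ x : Fin m → ℝ, Continuous fun r : ℝ => eval (Fin.cons r x : Fin (m + 1) → ℝ) Ψ := by
    intro r
    refine (MvPolynomial.continuous_eval Ψ).comp ?_
    fun_prop
  apply zero_of_open D a
  filter_upwards [(cont s).continuousAt.eventually_lt_const hs,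
    (cont t).continuousAt.eventually_const_lt ht] with x hx1 hx2
  obtain ⟨r, hr⟩ := mem_range_of_exists_le_of_exists_ge (cont2 x) ⟨s, hx1.le⟩ ⟨t, hx2.le⟩
  have hr' := hvan _ hr
  simp only at hr
  rw [eval_eq_eval_mv_eval'] at hr hr'
  have := congrArg (fun q => Polynomial.eval r (Polynomial.map (eval x) q)) huv
  simp only [Polynomial.map_add, Polynomial.map_mul, Polynomial.eval_add, Polynomial.eval_mul,
    Polynomial.map_C, Polynomial.eval_C] at this
  rw [← this, ← hf] at *
  rw [hr, hr']
  simp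

lemma dvd_coord {n : ℕ} (Ψ P : MvPolynomial (Fin n) ℝ) (hirr : Irreducible Ψ)
    (hvan : ∀ x : Fin n → ℝ, eval x Ψ = 0 → eval x P = 0)
    (i : Fin n) (a b : Fin n → ℝ) (hab : ∀ j, j ≠ i → a j = b j) (hs : eval a Ψ < 0)
    (ht : 0 < eval b Ψ) : Ψ ∣ P := by
  obtain _ | m := n
  · exact i.elim0
  let e : Fin (m + 1) ≃ Fin (m + 1) := Equiv.swap 0 i
  have hev : ∀ (x : Fin (m + 1) → ℝ) (q : MvPolynomial (Fin (m + 1)) ℝ),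
      eval x (renameEquiv ℝ e q) = eval (x ∘ e) q := fun x q => by simp [eval_rename]
  have hee : ∀ x : Fin (m + 1) → ℝ, (x ∘ e) ∘ e = x := fun x => by
    funext j; simp [e]
  rw [← map_dvd_iff (renameEquiv ℝ e)]
  have htail : Fin.tail (b ∘ e) = Fin.tail (a ∘ e) := by
    funext j
    refine (hab _ ?_).symm
    intro h
    have : (j.succ : Fin (m + 1)) = 0 := e.injective (by rw [h]; simp [e])
    exact Fin.succ_ne_zero j this
  refine dvd_zero_coord _ _ ((MulEquiv.irreducible_iff (renameEquiv ℝ e)).2 hirr) ?_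
    ((a ∘ e) 0) ((b ∘ e) 0) (Fin.tail (a ∘ e)) ?_ ?_
  · intro x
    rw [hev, hev]
    exact hvan _
  · rw [Fin.cons_self_tail, hev, hee]; exact hs
  · rw [← htail, Fin.cons_self_tail, hev, hee]; exact ht

lemma exists_axis {n : ℕ} (Ψ : MvPolynomial (Fin n) ℝ) (a b : Fin n → ℝ) (hs : eval a Ψ < 0)
    (ht : 0 < eval b Ψ) : ∃ (i : Fin n) (a b : Fin n → ℝ), (∀ j, j ≠ i → a j = b j) ∧
      eval a Ψ < 0 ∧ 0 < eval b Ψ := by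
  classical
  have hΨ : Ψ ≠ 0 := by rintro rfl; simp at hs
  -- mixed points
  let mix : ℕ → Fin n → Fin n ⊕ Fin n := fun k j => if j.val < k then Sum.inr j else Sum.inl j
  have hmix : ∀ k, Function.Injective (mix k) := by
    intro k j l h
    simp only [mix] at h
    split_ifs at h <;> simpa using h
  let Q : MvPolynomial (Fin n ⊕ Fin n) ℝ := ∏ k ∈ Finset.range (n + 1), rename (mix k) Ψ
  have hQ : Q ≠ 0 := Finset.prod_ne_zero_iff.2 fun k _ h =>
    hΨ (rename_injective _ (hmix k) (by simpa using h))
  obtain ⟨ε, hε, hae⟩ := Metric.eventually_nhds_iff.1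
    ((MvPolynomial.continuous_eval Ψ).continuousAt.eventually_lt_const hs)
  obtain ⟨δ, hδ, hbd⟩ := Metric.eventually_nhds_iff.1
    ((MvPolynomial.continuous_eval Ψ).continuousAt.eventually_const_lt ht)
  have hex : ∃ z : Fin n ⊕ Fin n → ℝ, (∀ j, dist (z (Sum.inl j)) (a j) < ε) ∧
      (∀ j, dist (z (Sum.inr j)) (b j) < δ) ∧ eval z Q ≠ 0 := by
    by_contra! hno
    apply hQ
    refine MvPolynomial.funext_set (Sum.elim (fun j => Metric.ball (a j) ε)
      (fun j => Metric.ball (b j) δ)) ?_ ?_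
    · rintro (j | j)
      · simp only [Sum.elim_inl, Real.ball_eq_Ioo]
        exact Set.Ioo_infinite (by linarith)
      · simp only [Sum.elim_inr, Real.ball_eq_Ioo]
        exact Set.Ioo_infinite (by linarith)
    · intro z hz
      rw [map_zero]
      exact hno z (fun j => hz (Sum.inl j) trivial) (fun j => hz (Sum.inr j) trivial)
  obtain ⟨z, hza, hzb, hz⟩ := hex
  have hz' : ∀ k ≤ n, eval (z ∘ mix k) Ψ ≠ 0 := by
    intro k hk
    rw [map_prod] at hz
    have := Finset.prod_ne_zero_iff.1 hz k (Finset.mem_range.2 (by omega))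
    rwa [eval_rename] at this
  have h0 : eval (z ∘ mix 0) Ψ < 0 := by
    apply hae
    rw [dist_pi_lt_iff hε]
    intro j
    simpa [mix] using hza j
  have hn : 0 < eval (z ∘ mix n) Ψ := by
    apply hbd
    rw [dist_pi_lt_iff hδ]
    intro j
    simpa [mix] using hzb j
  by_contra! hno
  have hall : ∀ k ≤ n, eval (z ∘ mix k) Ψ < 0 := by
    intro k
    induction k with
    | zero => intro _; exact h0
    | succ k ih =>
      intro hk
      refine lt_of_le_of_ne (hno ⟨k, hk⟩ (z ∘ mix k) (z ∘ mix (k + 1)) ?_ (ih (by omega)))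
        (hz' _ hk)
      intro j hj
      have : (j : ℕ) ≠ k := fun h => hj (Fin.ext h)
      have : (j : ℕ) < k ↔ (j : ℕ) < k + 1 := by omega
      simp [mix, this]
  exact absurd (hall n le_rfl) (not_lt.2 hn.le)

/-- If a polynomial `P` on `ℝⁿ` vanishes on the zero set of a nonzero (nonconstant)
harmonic polynomial `Ψ` which is irreducible over `ℝ`, then `Ψ` divides `P`. -/
theorem stmt0 {n : ℕ} (Ψ P : MvPolynomial (Fin n) ℝ)
    (hharm : mvLap Ψ = 0) (hnonconst : 0 < Ψ.totalDegree) (hirr : Irreducible Ψ)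
    (hvan : ∀ x : Fin n → ℝ, eval x Ψ = 0 → eval x P = 0) :
    Ψ ∣ P := by
  obtain ⟨a, ha⟩ := exists_neg Ψ hnonconst hharm
  obtain ⟨b, hb⟩ := exists_neg (-Ψ) (by rwa [totalDegree_neg])
    (by simpa [mvLap] using hharm)
  rw [map_neg, neg_lt_zero] at hb
  obtain ⟨i, a', b', hab, ha', hb'⟩ := exists_axis Ψ a b ha hb
  exact dvd_coord Ψ P hirr hvan i a' b' hab ha' hb'
end

section
/- Let Ψ(∂) be the differential operator associated to a homogeneous polynomial Ψ of degree m on ℝⁿ, and let φ(x) = g(|x|²) be a smooth radial function. If Ψ is harmonic, then Ψ(∂)φ(x) = Ψ(x) · h(|x|²) for some smooth function h depending on g and m. -/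
open MvPolynomial

/-- The `i`-th partial derivative of a function on `ℝⁿ`. -/
noncomputable def pd {n : ℕ} (i : Fin n) (f : EuclideanSpace ℝ (Fin n) → ℝ) :
    EuclideanSpace ℝ (Fin n) → ℝ :=
  fun x => fderiv ℝ f x (EuclideanSpace.single i 1)

/-- The differential monomial `∂^m = ∏ᵢ ∂ᵢ^(m i)` applied to a function. -/
noncomputable def monOp {n : ℕ} (m : Fin n →₀ ℕ) :
    (EuclideanSpace ℝ (Fin n) → ℝ) → (EuclideanSpace ℝ (Fin n) → ℝ) :=
  (List.ofFn fun i : Fin n => (pd i)^[m i]).foldr (· ∘ ·) id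

/-- The constant-coefficient differential operator `P(∂)` associated to a polynomial `P`,
obtained by substituting `∂/∂xᵢ` for `xᵢ`. -/
noncomputable def polyOp {n : ℕ} (P : MvPolynomial (Fin n) ℝ)
    (f : EuclideanSpace ℝ (Fin n) → ℝ) : EuclideanSpace ℝ (Fin n) → ℝ :=
  fun x => ∑ m ∈ P.support, P.coeff m * monOp m f x


/-- Laplacian as a linear map. -/
noncomputable def lapL (n : ℕ) : MvPolynomial (Fin n) ℝ →ₗ[ℝ] MvPolynomial (Fin n) ℝ :=
  ∑ i : Fin n, (pderiv i).toLinearMap ∘ₗ (pderiv i).toLinearMap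

lemma lapL_apply {n : ℕ} (P : MvPolynomial (Fin n) ℝ) : lapL n P = mvLap P := by
  simp [lapL, mvLap]

lemma pderiv_swap {n : ℕ} (i j : Fin n) (P : MvPolynomial (Fin n) ℝ) :
    pderiv i (pderiv j P) = pderiv j (pderiv i P) := by
  have h : ⁅(pderiv i : Derivation ℝ (MvPolynomial (Fin n) ℝ) (MvPolynomial (Fin n) ℝ)),
      (pderiv j : Derivation ℝ (MvPolynomial (Fin n) ℝ) (MvPolynomial (Fin n) ℝ))⁆ = 0 := by
    apply MvPolynomial.derivation_ext
    intro k
    simp only [Derivation.commutator_apply, pderiv_X, Derivation.coe_zero, Pi.zero_apply]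
    simp only [Pi.single_apply]
    split_ifs <;> simp
  have := congrArg (fun D => D P) h
  simpa [Derivation.commutator_apply, sub_eq_zero] using this

lemma lapL_pderiv {n : ℕ} (i : Fin n) (P : MvPolynomial (Fin n) ℝ) :
    lapL n (pderiv i P) = pderiv i (lapL n P) := by
  simp only [lapL_apply, mvLap, map_sum]
  refine Finset.sum_congr rfl fun j _ => ?_
  rw [pderiv_swap j i, pderiv_swap j i]

lemma lapL_X_mul {n : ℕ} (i : Fin n) (P : MvPolynomial (Fin n) ℝ) :
    lapL n (X i * P) = X i * lapL n P + (2 : ℝ) • pderiv i P := by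
  have h : ∀ j : Fin n, pderiv j (pderiv j (X i * P)) =
      X i * pderiv j (pderiv j P) + if j = i then (2 : ℝ) • pderiv i P else 0 := by
    intro j
    by_cases hj : j = i
    · subst hj
      simp only [Derivation.leibniz, pderiv_X_self, smul_eq_mul, map_add, if_true,
        Derivation.map_one_eq_zero]
      rw [two_smul]; ring
    · have : pderiv j (X i : MvPolynomial (Fin n) ℝ) = 0 := pderiv_X_of_ne (Ne.symm hj)
      simp [Derivation.leibniz, this, hj]
  simp only [lapL_apply, mvLap, h, Finset.sum_add_distrib, Finset.mul_sum]
  simp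

lemma lapL_pow_pderiv {n : ℕ} (i : Fin n) (j : ℕ) (P : MvPolynomial (Fin n) ℝ) :
    (lapL n ^ j) (pderiv i P) = pderiv i ((lapL n ^ j) P) := by
  induction j with
  | zero => simp
  | succ j ih => rw [pow_succ', Module.End.mul_apply, ih, lapL_pderiv, Module.End.mul_apply]

lemma lapL_pow_X_mul {n : ℕ} (i : Fin n) (j : ℕ) (P : MvPolynomial (Fin n) ℝ) :
    (lapL n ^ j) (X i * P) =
      X i * (lapL n ^ j) P + (2 * j : ℝ) • pderiv i ((lapL n ^ (j - 1)) P) := by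
  induction j with
  | zero => simp
  | succ j ih =>
    rw [pow_succ', Module.End.mul_apply, ih, map_add, lapL_X_mul, map_smul, lapL_pderiv,
      Module.End.mul_apply, add_assoc]
    congr 1
    rcases j with _ | j
    · simp
    · simp only [Nat.add_sub_cancel]
      rw [← Module.End.mul_apply, ← pow_succ', ← add_smul]
      congr 1
      push_cast; ring

lemma hasFDerivAt_evalP {n : ℕ} (Q : MvPolynomial (Fin n) ℝ) (x : EuclideanSpace ℝ (Fin n)) :
    ∃ f' : EuclideanSpace ℝ (Fin n) →L[ℝ] ℝ,
      HasFDerivAt (fun y : EuclideanSpace ℝ (Fin n) => eval (fun i => y i) Q) f' x ∧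
      ∀ i, f' (EuclideanSpace.single i 1) = eval (fun i => x i) (pderiv i Q) := by
  induction Q using MvPolynomial.induction_on with
  | C a => exact ⟨0, by simpa using hasFDerivAt_const a x, by simp⟩
  | add p q hp hq =>
    obtain ⟨a, ha, ha'⟩ := hp
    obtain ⟨b, hb, hb'⟩ := hq
    exact ⟨a + b, by simpa using ha.fun_add hb, fun i => by simp [ha', hb']⟩
  | mul_X p j hp =>
    obtain ⟨a, ha, ha'⟩ := hp
    have hb : HasFDerivAt (fun y : EuclideanSpace ℝ (Fin n) => y j)
      (EuclideanSpace.proj j : EuclideanSpace ℝ (Fin n) →L[ℝ] ℝ) x :=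
      (EuclideanSpace.proj j : EuclideanSpace ℝ (Fin n) →L[ℝ] ℝ).hasFDerivAt
    refine ⟨_, by simpa using ha.fun_mul hb, fun i => ?_⟩
    by_cases h : i = j
    · subst h; simp [ha', Derivation.leibniz]
    · have : pderiv i (X j : MvPolynomial (Fin n) ℝ) = 0 := pderiv_X_of_ne (Ne.symm h)
      simp [ha', Derivation.leibniz, this, h, Ne.symm h]

lemma hasFDerivAt_term {n : ℕ} (Q : MvPolynomial (Fin n) ℝ) (g : ℝ → ℝ)
    (hg : ContDiff ℝ (⊤ : ℕ∞) g) (k : ℕ) (x : EuclideanSpace ℝ (Fin n)) :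
    ∃ f' : EuclideanSpace ℝ (Fin n) →L[ℝ] ℝ,
      HasFDerivAt (fun y : EuclideanSpace ℝ (Fin n) =>
        eval (fun i => y i) Q * iteratedDeriv k g (∑ i, y i ^ 2)) f' x ∧
      ∀ i, f' (EuclideanSpace.single i 1) =
        eval (fun i => x i) (pderiv i Q) * iteratedDeriv k g (∑ i, x i ^ 2) +
        2 * (x i * eval (fun i => x i) Q) * iteratedDeriv (k + 1) g (∑ i, x i ^ 2) := by
  obtain ⟨a, ha, ha'⟩ := hasFDerivAt_evalP Q x
  obtain ⟨b, hb, hb'⟩ := hasFDerivAt_evalP (∑ i, X i ^ 2 : MvPolynomial (Fin n) ℝ) x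
  simp only [map_sum, map_pow, eval_X] at hb
  have hd : HasDerivAt (iteratedDeriv k g) (iteratedDeriv (k + 1) g (∑ i, x i ^ 2))
      (∑ i, x i ^ 2) := by
    rw [iteratedDeriv_succ]
    exact ((hg.differentiable_iteratedDeriv k (by exact_mod_cast ENat.natCast_lt_top k)) _).hasDerivAt
  have hc := hd.comp_hasFDerivAt x hb
  refine ⟨_, ha.mul hc, fun i => ?_⟩
  have hbi : b (EuclideanSpace.single i 1) = 2 * x i := by
    rw [hb', map_sum, Finset.sum_eq_single i]
    · simp [Derivation.leibniz_pow]
    · intro j _ hj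
      have : pderiv i (X j : MvPolynomial (Fin n) ℝ) = 0 := pderiv_X_of_ne hj
      simp [Derivation.leibniz_pow, this]
    · simp
  simp [ha', hbi]
  ring

noncomputable def cf (p : ℕ × ℕ) : ℝ := 2 ^ p.2 / (2 ^ p.1 * (p.1.factorial : ℝ))

/-- Closed form of `P(∂)[g(|x|²)]` for homogeneous `P` of degree `d`. -/
noncomputable def TT {n : ℕ} (g : ℝ → ℝ) (d : ℕ) (P : MvPolynomial (Fin n) ℝ)
    (x : EuclideanSpace ℝ (Fin n)) : ℝ :=
  ∑ p ∈ Finset.HasAntidiagonal.antidiagonal d,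
    cf p * (eval (fun i => x i) ((lapL n ^ p.1) P) * iteratedDeriv p.2 g (∑ i, x i ^ 2))

lemma pd_TT {n : ℕ} (g : ℝ → ℝ) (hg : ContDiff ℝ (⊤ : ℕ∞) g) (d : ℕ)
    (P : MvPolynomial (Fin n) ℝ) (hP : (lapL n ^ (d + 1)) P = 0) (i : Fin n) :
    pd i (TT g d P) = TT g (d + 1) (X i * P) := by
  funext x
  choose f' hf hf' using fun p : ℕ × ℕ => hasFDerivAt_term ((lapL n ^ p.1) P) g hg p.2 x
  have h1 : HasFDerivAt (TT g d P) (∑ p ∈ Finset.HasAntidiagonal.antidiagonal d, cf p • f' p) x :=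
    HasFDerivAt.fun_sum fun p _ => (hf p).const_mul (cf p)
  have h2 : TT g (d + 1) (X i * P) x =
      (∑ p ∈ Finset.HasAntidiagonal.antidiagonal (d + 1), cf p * ((x i * eval (fun i => x i) ((lapL n ^ p.1) P))
        * iteratedDeriv p.2 g (∑ i, x i ^ 2))) +
      ∑ p ∈ Finset.HasAntidiagonal.antidiagonal (d + 1), cf p * ((2 * p.1 : ℝ) *
        eval (fun i => x i) (pderiv i ((lapL n ^ (p.1 - 1)) P))
        * iteratedDeriv p.2 g (∑ i, x i ^ 2)) := by
    rw [TT, ← Finset.sum_add_distrib]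
    refine Finset.sum_congr rfl fun p _ => ?_
    rw [lapL_pow_X_mul]
    simp only [map_add, map_mul, eval_X, smul_eval]
    ring
  rw [h2, Finset.Nat.sum_antidiagonal_succ', Finset.Nat.sum_antidiagonal_succ, pd, h1.fderiv]
  simp only [hP, map_zero, mul_zero, zero_mul, add_zero, zero_add, Nat.cast_zero,
    ContinuousLinearMap.sum_apply, ContinuousLinearMap.smul_apply, hf', smul_eq_mul]
  rw [← Finset.sum_add_distrib]
  refine Finset.sum_congr rfl fun p _ => ?_
  have e1 : cf (p.1, p.2 + 1) = 2 * cf p := by simp only [cf]; ring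
  have e2 : cf (p.1 + 1, p.2) * (2 * ((p.1 + 1 : ℕ) : ℝ)) = cf p := by
    have : (p.1.factorial : ℝ) ≠ 0 := by positivity
    have : (p.1 : ℝ) + 1 ≠ 0 := by positivity
    simp only [cf, Nat.factorial_succ]; push_cast; field_simp; ring
  rw [e1, Nat.add_sub_cancel, ← e2]
  ring

def Good {n : ℕ} (g : ℝ → ℝ) (d : ℕ) (P : MvPolynomial (Fin n) ℝ)
    (f : EuclideanSpace ℝ (Fin n) → ℝ) : Prop :=
  f = TT g d P ∧ (lapL n ^ (d + 1)) P = 0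

lemma Good.step {n : ℕ} {g : ℝ → ℝ} (hg : ContDiff ℝ (⊤ : ℕ∞) g) {d : ℕ}
    {P : MvPolynomial (Fin n) ℝ} {f : EuclideanSpace ℝ (Fin n) → ℝ} (h : Good g d P f)
    (i : Fin n) : Good g (d + 1) (X i * P) (pd i f) := by
  obtain ⟨rfl, h⟩ := h
  refine ⟨pd_TT g hg d P h i, ?_⟩
  rw [lapL_pow_X_mul, Nat.add_sub_cancel, h, pow_succ', Module.End.mul_apply, h]
  simp

lemma Good.iter {n : ℕ} {g : ℝ → ℝ} (hg : ContDiff ℝ (⊤ : ℕ∞) g) {d : ℕ}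
    {P : MvPolynomial (Fin n) ℝ} {f : EuclideanSpace ℝ (Fin n) → ℝ} (h : Good g d P f)
    (i : Fin n) (k : ℕ) : Good g (k + d) (X i ^ k * P) ((pd i)^[k] f) := by
  induction k with
  | zero => simpa using h
  | succ k ih =>
    have := ih.step hg i
    rw [Function.iterate_succ_apply']
    convert this using 1
    · ring
    · ring

lemma Good.list {n : ℕ} {g : ℝ → ℝ} (hg : ContDiff ℝ (⊤ : ℕ∞) g)
    {f : EuclideanSpace ℝ (Fin n) → ℝ} (h : Good g 0 1 f)
    (m : Fin n → ℕ) (l : List (Fin n)) :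
    Good g ((l.map m).sum) ((l.map fun i => X i ^ m i).prod)
      ((l.map fun i => (pd i)^[m i]).foldr (· ∘ ·) id f) := by
  induction l with
  | nil => simpa using h
  | cons a l ih => simpa using ih.iter hg a (m a)

lemma monOp_eq {n : ℕ} {g : ℝ → ℝ} (hg : ContDiff ℝ (⊤ : ℕ∞) g) (m : Fin n →₀ ℕ) :
    monOp m (fun y : EuclideanSpace ℝ (Fin n) => g (∑ i, y i ^ 2)) =
      TT g (∑ i, m i) (monomial m 1) := by
  have h0 : Good g 0 (1 : MvPolynomial (Fin n) ℝ)
      (fun y : EuclideanSpace ℝ (Fin n) => g (∑ i, y i ^ 2)) := by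
    refine ⟨?_, ?_⟩
    · funext x; simp [TT, cf]
    · simp [lapL_apply, mvLap]
  have h := (Good.list hg h0 m (List.finRange n)).1
  rw [monOp, List.ofFn_eq_map, h, ← List.ofFn_eq_map, ← List.ofFn_eq_map, List.sum_ofFn,
    List.prod_ofFn, monomial_eq, Finsupp.prod_fintype _ _ (by simp)]
  simp

/-- Hecke–Bochner type identity: if `Ψ` is a homogeneous harmonic polynomial of degree
`m` on `ℝⁿ` and `φ(x) = g(|x|²)` is a smooth radial function, then
`Ψ(∂)φ(x) = Ψ(x)·h(|x|²)` for some smooth `h`. -/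
theorem stmt9 {n : ℕ} (hn : 2 ≤ n) (m : ℕ) (Ψ : MvPolynomial (Fin n) ℝ)
    (hΨhom : Ψ.IsHomogeneous m) (hΨharm : mvLap Ψ = 0)
    (g : ℝ → ℝ) (hg : ContDiff ℝ (⊤ : ℕ∞) g) :
    ∃ h : ℝ → ℝ, ContDiff ℝ (⊤ : ℕ∞) h ∧
      ∀ x : EuclideanSpace ℝ (Fin n),
        polyOp Ψ (fun y => g (∑ i, y i ^ 2)) x =
          eval (fun i => x i) Ψ * h (∑ i, x i ^ 2) := by
  refine ⟨fun t => 2 ^ m * iteratedDeriv m g t, ?_, fun x => ?_⟩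
  · refine contDiff_const.mul ?_
    rw [contDiff_infty] at hg ⊢
    intro k
    exact ContDiff.iterate_deriv' k m (hg (k + m)) |> fun h => by
      rwa [← iteratedDeriv_eq_iterate] at h
  · have hT : polyOp Ψ (fun y => g (∑ i, y i ^ 2)) x = TT g m Ψ x := by
      have hs : ∀ p ∈ Ψ.support, Ψ.coeff p * monOp p (fun y => g (∑ i, y i ^ 2)) x =
          Ψ.coeff p * TT g m (monomial p 1) x := by
        intro p hp
        have hd : ∑ i, p i = m := by
          have := hΨhom (mem_support_iff.mp hp)
          rw [← this, Finsupp.weight_apply, Finsupp.sum_fintype _ _ (by simp)]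
          simp
        rw [monOp_eq hg, hd]
      rw [polyOp, Finset.sum_congr rfl hs]
      conv_rhs => rw [Ψ.as_sum]
      simp only [TT, Finset.mul_sum, map_sum, Finset.sum_mul]
      rw [Finset.sum_comm]
      refine Finset.sum_congr rfl fun q _ => Finset.sum_congr rfl fun p _ => ?_
      have : monomial p (coeff p Ψ) = coeff p Ψ • monomial p (1 : ℝ) := by
        simp [smul_monomial]
      rw [this, map_smul, smul_eval]
      ring
    rw [hT, TT, Finset.sum_eq_single (0, m)]
    · simp [cf]; ring
    · rintro ⟨j, k⟩ hjk hne
      rcases j with _ | j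
      · simp at hjk; simp [hjk] at hne
      · simp [pow_succ, lapL_apply, hΨharm]
    · simp
end
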